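/- arXiv:1212.6451 — 2 statements merged into one kernel-verified Lean document; each statement's English description precedes it below -/
import Mathlib

section
/- Let Ψ : (0,∞) → (0,∞) be continuous and regularly varying at 0 with index γ > 1, and let u : (0,∞) → (0,∞) be a differentiable solution of the ordinary differential equation u′(t) = −Ψ(u(t)) for all t > 0. Then u is regularly varying at infinity with index 1/(1−γ), i.e. for every x > 0, u(tx)/u(t) → x^{1/(1−γ)} as t → ∞. -/
open MeasureTheory Set Filter

noncomputable section

/-!
The travel time `F y = ∫ v in y..u 1, (Ψ v)⁻¹` satisfies `F (u t) = t - 1`, so `u` is an asymptotic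
inverse of `F` at infinity. Since `F' = -1 / Ψ` varies regularly at `0` with index `-γ` and `F`
blows up there, l'Hôpital's rule applied to `F (y * x) / F y` shows that `F` varies regularly with
index `1 - γ`. Monotonicity of `F` carries this over to `u`, with the reciprocal index.
-/

open Asymptotics Topology

section LHopital

variable {f f' g g' : ℝ → ℝ} {a : ℝ}

theorem eventually_mul_lt_of_deriv_le_mul {c m : ℝ} (hcm : c < m)
    (hf : ∀ᶠ x in 𝓝[>] a, HasDerivAt f (f' x) x) (hg : ∀ᶠ x in 𝓝[>] a, HasDerivAt g (g' x) x)
    (hle : ∀ᶠ x in 𝓝[>] a, f' x ≤ m * g' x) (hg_top : Tendsto g (𝓝[>] a) atTop) :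
    ∀ᶠ x in 𝓝[>] a, c * g x < f x := by
  obtain ⟨b, hab, hb⟩ := (nhdsGT_basis a).eventually_iff.1 (hf.and (hg.and hle))
  have hderiv : ∀ x ∈ Ioo a b, HasDerivAt (fun y => f y - m * g y) (f' x - m * g' x) x :=
    fun x hx => (hb hx).1.sub ((hb hx).2.1.const_mul m)
  have hanti : AntitoneOn (fun y => f y - m * g y) (Ioo a b) := by
    refine antitoneOn_of_hasDerivWithinAt_nonpos (convex_Ioo a b) (HasDerivAt.continuousOn hderiv)
      (fun x hx => (hderiv x (interior_subset hx)).hasDerivWithinAt) fun x hx => ?_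
    exact sub_nonpos.2 (hb (interior_subset hx)).2.2
  obtain ⟨z, hz⟩ := nonempty_Ioo.2 hab
  filter_upwards [Ioo_mem_nhdsGT hz.1,
    hg_top.eventually_gt_atTop ((m * g z - f z) / (m - c))] with x hx hgx
  have hfg : f z - m * g z ≤ f x - m * g x := hanti ⟨hx.1, hx.2.trans hz.2⟩ hz hx.2.le
  rw [div_lt_iff₀ (sub_pos.2 hcm)] at hgx
  linarith

theorem lhopital_atTop_nhdsGT {l : ℝ}
    (hf : ∀ᶠ x in 𝓝[>] a, HasDerivAt f (f' x) x) (hg : ∀ᶠ x in 𝓝[>] a, HasDerivAt g (g' x) x)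
    (hg' : ∀ᶠ x in 𝓝[>] a, g' x < 0) (hg_top : Tendsto g (𝓝[>] a) atTop)
    (hlim : Tendsto (fun x => f' x / g' x) (𝓝[>] a) (𝓝 l)) :
    Tendsto (fun x => f x / g x) (𝓝[>] a) (𝓝 l) := by
  refine tendsto_order.2 ⟨fun c hc => ?_, fun c hc => ?_⟩
  · obtain ⟨m, hcm, hml⟩ := exists_between hc
    have hle : ∀ᶠ x in 𝓝[>] a, f' x ≤ m * g' x := by
      filter_upwards [hlim.eventually_const_lt hml, hg'] with x hx hgx
      exact ((lt_div_iff_of_neg hgx).1 hx).le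
    filter_upwards [eventually_mul_lt_of_deriv_le_mul hcm hf hg hle hg_top,
      hg_top.eventually_gt_atTop 0] with x hx hgx
    exact (lt_div_iff₀ hgx).2 hx
  · obtain ⟨m, hlm, hmc⟩ := exists_between hc
    have hle : ∀ᶠ x in 𝓝[>] a, -f' x ≤ -m * g' x := by
      filter_upwards [hlim.eventually_lt_const hlm, hg'] with x hx hgx
      linarith [(div_lt_iff_of_neg hgx).1 hx]
    filter_upwards [eventually_mul_lt_of_deriv_le_mul (neg_lt_neg hmc)
      (hf.mono fun _ hx => hx.neg) hg hle hg_top, hg_top.eventually_gt_atTop 0] with x hx hgx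
    refine (div_lt_iff₀ hgx).2 ?_
    rw [Pi.neg_apply] at hx
    linarith

end LHopital

section AsymptoticInverse

variable {ι : Type*} {l : Filter ι} {F : ℝ → ℝ} {u : ι → ℝ}

theorem tendsto_atTop_nhdsGT_zero_of_antitoneOn_of_comp [l.NeBot] (hF : AntitoneOn F (Ioi 0))
    (hu : ∀ᶠ t in l, 0 < u t) (hFu : Tendsto (F ∘ u) l atTop) :
    Tendsto F (𝓝[>] 0) atTop := by
  refine tendsto_atTop.2 fun M => ?_
  obtain ⟨t, hut, hMt⟩ := (hu.and (hFu.eventually_ge_atTop M)).exists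
  filter_upwards [Ioo_mem_nhdsGT hut] with y hy
  exact hMt.trans (hF hy.1 hut hy.2.le)

theorem tendsto_nhdsGT_zero_of_antitoneOn_of_comp (hF : AntitoneOn F (Ioi 0))
    (hu : ∀ᶠ t in l, 0 < u t) (hFu : Tendsto (F ∘ u) l atTop) :
    Tendsto u l (𝓝[>] 0) := by
  refine (nhdsGT_basis 0).tendsto_right_iff.2 fun δ hδ => ?_
  filter_upwards [hu, hFu.eventually_gt_atTop (F δ)] with t hut hFt
  exact ⟨hut, hF.reflect_lt hδ hut hFt⟩

theorem tendsto_comp_mul_const_div_self {f : ℝ → ℝ} (hf : f ~[atTop] id) {x : ℝ} (hx : 0 < x) :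
    Tendsto (fun t => f (t * x) / t) atTop (𝓝 x) := by
  have hequiv : (fun t => f (t * x) / t) ~[atTop] fun t => t * x / t :=
    (hf.comp_tendsto (tendsto_id.atTop_mul_const hx)).div IsEquivalent.refl
  refine hequiv.symm.tendsto_nhds (tendsto_const_nhds.congr' ?_)
  filter_upwards [eventually_ne_atTop 0] with t ht
  exact (mul_div_cancel_left₀ x ht).symm

end AsymptoticInverse

/-- Regular variation of `f` along `l` with index `ρ`. The filter `l` is `𝓝[>] 0` for variation at
`0` and `atTop` for variation at infinity. The positivity of `f` near `l` that usually goes with the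
notion is not part of this definition. -/
def IsRegularlyVarying (f : ℝ → ℝ) (ρ : ℝ) (l : Filter ℝ) : Prop :=
  ∀ x : ℝ, 0 < x → Tendsto (fun t => f (t * x) / f t) l (𝓝 (x ^ ρ))

namespace IsRegularlyVarying

variable {f F u : ℝ → ℝ} {ρ α : ℝ} {l : Filter ℝ}

theorem neg (hf : IsRegularlyVarying f ρ l) : IsRegularlyVarying (fun t => -f t) ρ l := by
  simpa only [IsRegularlyVarying, neg_div_neg_eq] using hf

theorem inv (hf : IsRegularlyVarying f ρ l) : IsRegularlyVarying (fun t => (f t)⁻¹) (-ρ) l := by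
  intro x hx
  simpa only [Real.rpow_neg hx.le, inv_div_inv, inv_div] using
    (hf x hx).inv₀ (Real.rpow_pos_of_pos hx ρ).ne'

theorem of_hasDerivAt (hf : IsRegularlyVarying f ρ (𝓝[>] 0))
    (hF : ∀ᶠ y in 𝓝[>] 0, HasDerivAt F (f y) y) (hf_neg : ∀ᶠ y in 𝓝[>] 0, f y < 0)
    (hF_top : Tendsto F (𝓝[>] 0) atTop) : IsRegularlyVarying F (ρ + 1) (𝓝[>] 0) := by
  intro x hx
  have hderiv : ∀ᶠ y in 𝓝[>] 0, HasDerivAt (fun z => F (z * x)) (f (y * x) * x) y := by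
    filter_upwards [eventually_nhdsGT_zero_mul_left hx hF] with y hy
    rw [mul_comm x y] at hy
    exact hy.comp y (hasDerivAt_mul_const x)
  refine lhopital_atTop_nhdsGT hderiv hF hf_neg hF_top ?_
  simpa only [Real.rpow_add_one hx.ne', div_mul_eq_mul_div] using (hf x hx).mul_const x

theorem tendsto_comp_mul_div_self (hF : IsRegularlyVarying F α (𝓝[>] 0))
    (hu : Tendsto u atTop (𝓝[>] 0)) (hFu : (F ∘ u) ~[atTop] id) {a : ℝ} (ha : 0 < a) :
    Tendsto (fun t => F (u t * a) / t) atTop (𝓝 (a ^ α)) := by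
  have hequiv : (fun t => F (u t * a) / F (u t)) ~[atTop] fun t => F (u t * a) / t :=
    IsEquivalent.refl.div hFu
  exact hequiv.tendsto_nhds ((hF a ha).comp hu)

theorem of_comp_isEquivalent_id (hF : IsRegularlyVarying F α (𝓝[>] 0)) (hα : α < 0)
    (hF_anti : AntitoneOn F (Ioi 0)) (hu : ∀ᶠ t in atTop, 0 < u t)
    (hFu : (F ∘ u) ~[atTop] id) : IsRegularlyVarying u (1 / α) atTop := by
  intro x hx
  have hu_zero : Tendsto u atTop (𝓝[>] 0) :=
    tendsto_nhdsGT_zero_of_antitoneOn_of_comp hF_anti hu (hFu.symm.tendsto_atTop tendsto_id)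
  have hux : ∀ᶠ t in atTop, 0 < u (t * x) := (tendsto_id.atTop_mul_const hx).eventually hu
  have hFux : Tendsto (fun t => F (u (t * x)) / t) atTop (𝓝 x) :=
    tendsto_comp_mul_const_div_self hFu hx
  have hx_rpow : (x ^ (1 / α)) ^ α = x := by
    rw [one_div, Real.rpow_inv_rpow hx.le hα.ne]
  have hpos : 0 < x ^ (1 / α) := Real.rpow_pos_of_pos hx _
  refine tendsto_order.2 ⟨fun a ha => ?_, fun b hb => ?_⟩
  · rcases le_or_gt a 0 with ha0 | ha0
    · filter_upwards [hu, hux] with t hut huxt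
      exact ha0.trans_lt (div_pos huxt hut)
    have hxa : x < a ^ α := hx_rpow ▸ Real.rpow_lt_rpow_of_neg ha0 ha hα
    filter_upwards [hu, hux, eventually_gt_atTop 0,
      hFux.eventually_lt (hF.tendsto_comp_mul_div_self hu_zero hFu ha0) hxa] with t hut huxt ht hlt
    rw [lt_div_iff₀' hut]
    exact hF_anti.reflect_lt huxt (mul_pos hut ha0) ((div_lt_div_iff_of_pos_right ht).1 hlt)
  · have hb0 : 0 < b := hpos.trans hb
    have hbx : b ^ α < x := hx_rpow ▸ Real.rpow_lt_rpow_of_neg hpos hb hα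
    filter_upwards [hu, hux, eventually_gt_atTop 0,
      (hF.tendsto_comp_mul_div_self hu_zero hFu hb0).eventually_lt hFux hbx] with t hut huxt ht hlt
    rw [div_lt_iff₀' hut]
    exact hF_anti.reflect_lt (mul_pos hut hb0) huxt ((div_lt_div_iff_of_pos_right ht).1 hlt)

end IsRegularlyVarying

/-- The time that a solution of `u' = -Ψ u` takes to descend from the level `b` to the level `y`;
it is negative for `b < y`. -/
def travelTime (Ψ : ℝ → ℝ) (b y : ℝ) : ℝ :=
  ∫ v in y..b, (Ψ v)⁻¹

section TravelTime

variable {Ψ u : ℝ → ℝ} {b s t y : ℝ}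

theorem hasDerivAt_travelTime (hΨpos : ∀ v : ℝ, 0 < v → 0 < Ψ v) (hΨcont : ContinuousOn Ψ (Ioi 0))
    (hb : 0 < b) (hy : 0 < y) :
    HasDerivAt (travelTime Ψ b) (-(Ψ y)⁻¹) y := by
  have hinv : ContinuousOn (fun v => (Ψ v)⁻¹) (Ioi 0) := hΨcont.inv₀ fun v hv => (hΨpos v hv).ne'
  exact intervalIntegral.integral_hasDerivAt_left
    (hinv.mono (ordConnected_Ioi.uIcc_subset hy hb)).intervalIntegrable
    (hinv.stronglyMeasurableAtFilter isOpen_Ioi y hy) (hinv.continuousAt (Ioi_mem_nhds hy))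

theorem antitoneOn_travelTime (hΨpos : ∀ v : ℝ, 0 < v → 0 < Ψ v) (hΨcont : ContinuousOn Ψ (Ioi 0))
    (hb : 0 < b) : AntitoneOn (travelTime Ψ b) (Ioi 0) := by
  have hderiv := fun y (hy : y ∈ Ioi (0 : ℝ)) => hasDerivAt_travelTime hΨpos hΨcont hb hy
  refine antitoneOn_of_hasDerivWithinAt_nonpos (convex_Ioi 0) (HasDerivAt.continuousOn hderiv)
    (fun y hy => (hderiv y (interior_subset hy)).hasDerivWithinAt) fun y hy => ?_
  exact neg_nonpos.2 (inv_pos.2 (hΨpos y (interior_subset hy))).le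

theorem travelTime_solution (hΨpos : ∀ v : ℝ, 0 < v → 0 < Ψ v) (hΨcont : ContinuousOn Ψ (Ioi 0))
    (hupos : ∀ t : ℝ, 0 < t → 0 < u t) (hode : ∀ t : ℝ, 0 < t → HasDerivAt u (-Ψ (u t)) t)
    (hs : 0 < s) (ht : 0 < t) :
    travelTime Ψ (u s) (u t) = t - s := by
  have hIcc : uIcc t s ⊆ Ioi 0 := ordConnected_Ioi.uIcc_subset ht hs
  have hu : ContinuousOn u (Ioi 0) := HasDerivAt.continuousOn hode
  have hinv : ContinuousOn (fun v => (Ψ v)⁻¹) (Ioi 0) := hΨcont.inv₀ fun v hv => (hΨpos v hv).ne'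
  calc travelTime Ψ (u s) (u t)
      = ∫ τ in t..s, ((fun v => (Ψ v)⁻¹) ∘ u) τ * -Ψ (u τ) :=
        (intervalIntegral.integral_comp_mul_deriv' (fun τ hτ => hode τ (hIcc hτ))
          ((hΨcont.comp hu hupos).neg.mono hIcc)
          (hinv.mono (image_subset_iff.2 fun τ hτ => hupos τ (hIcc hτ)))).symm
    _ = ∫ _ in t..s, (-1 : ℝ) := by
        refine intervalIntegral.integral_congr fun τ hτ => ?_
        have hne : Ψ (u τ) ≠ 0 := (hΨpos _ (hupos τ (hIcc hτ))).ne'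
        simp only [Function.comp_apply, mul_neg, inv_mul_cancel₀ hne]
    _ = t - s := by
        rw [intervalIntegral.integral_const, smul_eq_mul, mul_neg_one, neg_sub]

theorem travelTime_comp_isEquivalent_id (hΨpos : ∀ v : ℝ, 0 < v → 0 < Ψ v)
    (hΨcont : ContinuousOn Ψ (Ioi 0)) (hupos : ∀ t : ℝ, 0 < t → 0 < u t)
    (hode : ∀ t : ℝ, 0 < t → HasDerivAt u (-Ψ (u t)) t) (hs : 0 < s) :
    (travelTime Ψ (u s) ∘ u) ~[atTop] id := by
  have hsub : (fun t : ℝ => id t + -s) ~[atTop] id :=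
    IsEquivalent.refl.add_const_of_norm_tendsto_atTop tendsto_norm_atTop_atTop
  refine hsub.congr_left ?_
  filter_upwards [eventually_gt_atTop 0] with t ht
  exact (travelTime_solution hΨpos hΨcont hupos hode hs ht).symm

end TravelTime

/-- if `Ψ : (0,∞) → (0,∞)` is continuous and regularly varying
at `0` with index `γ > 1`, then any positive solution of `u' = -Ψ(u)` is
regularly varying at infinity with index `1/(1-γ)`. -/
theorem ode_solution_regularly_varying
    (Ψ : ℝ → ℝ) (γ : ℝ) (hγ : 1 < γ)
    (hΨpos : ∀ u : ℝ, 0 < u → 0 < Ψ u)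
    (hΨcont : ContinuousOn Ψ (Ioi 0))
    (hreg : ∀ x : ℝ, 0 < x →
      Tendsto (fun t => Ψ (t * x) / Ψ t) (nhdsWithin 0 (Ioi 0)) (nhds (x ^ γ)))
    (u : ℝ → ℝ) (hupos : ∀ t : ℝ, 0 < t → 0 < u t)
    (hode : ∀ t : ℝ, 0 < t → HasDerivAt u (-Ψ (u t)) t) :
    ∀ x : ℝ, 0 < x →
      Tendsto (fun t => u (t * x) / u t) atTop (nhds (x ^ (1 / (1 - γ)))) := by
  have hu_one : 0 < u 1 := hupos 1 one_pos
  have hu_ev : ∀ᶠ t in atTop, 0 < u t := (eventually_gt_atTop 0).mono hupos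
  have hF_anti : AntitoneOn (travelTime Ψ (u 1)) (Ioi 0) :=
    antitoneOn_travelTime hΨpos hΨcont hu_one
  have hFu : (travelTime Ψ (u 1) ∘ u) ~[atTop] id :=
    travelTime_comp_isEquivalent_id hΨpos hΨcont hupos hode one_pos
  have hF_top : Tendsto (travelTime Ψ (u 1)) (𝓝[>] 0) atTop :=
    tendsto_atTop_nhdsGT_zero_of_antitoneOn_of_comp hF_anti hu_ev
      (hFu.symm.tendsto_atTop tendsto_id)
  have hF : IsRegularlyVarying (travelTime Ψ (u 1)) (-γ + 1) (𝓝[>] 0) := by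
    have hΨ : IsRegularlyVarying Ψ γ (𝓝[>] 0) := hreg
    refine hΨ.inv.neg.of_hasDerivAt ?_ ?_ hF_top <;> filter_upwards [self_mem_nhdsWithin] with y hy
    exacts [hasDerivAt_travelTime hΨpos hΨcont hu_one hy, neg_lt_zero.2 (inv_pos.2 (hΨpos y hy))]
  rw [neg_add_eq_sub] at hF
  exact hF.of_comp_isEquivalent_id (sub_neg.2 hγ) hF_anti hu_ev hFu
end
end

section
/- Let Ψ be a critical branching mechanism, not identically zero. Then for all s > 0: (i) Ψ(s)/s ≤ Ψ′(s) ≤ 2Ψ(s)/s, equivalently s ↦ Ψ(s)/s is nondecreasing and s ↦ Ψ(s)/s² is nonincreasing on (0,∞); and (ii) the function s ↦ 1/Ψ(s) is convex on (0,∞). -/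
open MeasureTheory Set Filter

noncomputable section

/-!
Put `q s = Ψ s / s`. Since `(exp (-s x) - 1 + s x) / s = ∫ y in 0..x, (1 - exp (-s y))`, the
function `q` is a mixture of concave functions of `s`, hence concave, and it is nonnegative.
A nonnegative concave function on the half-line is nondecreasing and `q s / s` is nonincreasing;
differentiating these two facts gives the bounds on `Ψ'`. Finally `1 / Ψ s = s⁻¹ * (q s)⁻¹` is a
product of two nonnegative convex nonincreasing functions.
-/

section OrderedField

variable {𝕜 : Type*} [Field 𝕜] [LinearOrder 𝕜] [IsStrictOrderedRing 𝕜] {f : 𝕜 → 𝕜} {S : Set 𝕜}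

lemma monotoneOn_of_concaveOn_of_bddBelow (hf : ConcaveOn 𝕜 S f) (hS : ¬BddAbove S)
    (hbdd : BddBelow (f '' S)) : MonotoneOn f S := by
  intro x hx y hy hxy
  by_contra! hlt
  obtain ⟨c, hc⟩ := hbdd
  have hxy' : x < y := hxy.lt_of_ne (by rintro rfl; exact hlt.false)
  set m := (f y - f x) / (y - x)
  have hm : m < 0 := div_neg_of_neg_of_pos (sub_neg.2 hlt) (sub_pos.2 hxy')
  -- The line through `(x, f x)` and `(y, f y)` falls below the bound `c` beyond this point.
  obtain ⟨z, hz, hzlt⟩ := not_bddAbove_iff.1 hS (y + (f y - c) / -m)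
  have hcy : c ≤ f y := hc (mem_image_of_mem f hy)
  have hcz : c ≤ f z := hc (mem_image_of_mem f hz)
  have hyz : y < z :=
    (le_add_of_nonneg_right (div_nonneg (sub_nonneg.2 hcy) (neg_pos.2 hm).le)).trans_lt hzlt
  have hslope : f z - f y ≤ m * (z - y) :=
    (div_le_iff₀ (sub_pos.2 hyz)).1 (hf.slope_anti_adjacent hx hz hxy' hyz)
  have hgap : f y - c < (z - y) * -m := (div_lt_iff₀ (neg_pos.2 hm)).1 (lt_sub_iff_add_lt'.2 hzlt)
  linarith

lemma antitoneOn_div_self_of_concaveOn_of_nonneg (hf : ConcaveOn 𝕜 (Ioi 0) f)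
    (hnonneg : ∀ x, 0 < x → 0 ≤ f x) : AntitoneOn (fun x ↦ f x / x) (Ioi 0) := by
  intro x hx y hy hxy
  by_contra! hlt
  have hx : 0 < x := hx
  have hy : 0 < y := hy
  have hxy' : x < y := hxy.lt_of_ne (by rintro rfl; exact hlt.false)
  set m := (f y - f x) / (y - x) with hm_def
  have hfx : f x < m * x := by
    rw [div_lt_div_iff₀ hx hy] at hlt
    rw [hm_def, div_mul_eq_mul_div, lt_div_iff₀ (sub_pos.2 hxy')]
    linarith
  have hm : 0 < m := pos_of_mul_pos_left ((hnonneg x hx).trans_lt hfx) hx.le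
  -- The line through `(x, f x)` and `(y, f y)` is negative at every `z < x - f x / m`.
  obtain ⟨z, hz, hzlt⟩ : ∃ z, 0 < z ∧ z < x - f x / m :=
    exists_between (sub_pos.2 ((div_lt_iff₀' hm).2 hfx))
  have hzx : z < x := hzlt.trans_le (sub_le_self x (div_nonneg (hnonneg x hx) hm.le))
  have hslope : m * (x - z) ≤ f x - f z :=
    (le_div_iff₀ (sub_pos.2 hzx)).1 (hf.slope_anti_adjacent hz hy hzx hxy')
  have hgap : f x < m * (x - z) := (div_lt_iff₀' hm).1 (lt_sub_comm.1 hzlt)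
  linarith [hnonneg z hz]

lemma monotoneOn_Ioi_of_concaveOn_of_nonneg (hf : ConcaveOn 𝕜 (Ioi 0) f)
    (hnonneg : ∀ x, 0 < x → 0 ≤ f x) : MonotoneOn f (Ioi 0) :=
  monotoneOn_of_concaveOn_of_bddBelow hf (not_bddAbove_Ioi 0)
    ⟨0, forall_mem_image.2 hnonneg⟩

lemma pos_of_concaveOn_Ioi_of_nonneg (hf : ConcaveOn 𝕜 (Ioi 0) f)
    (hnonneg : ∀ x, 0 < x → 0 ≤ f x) (hne : ∃ x, 0 < x ∧ f x ≠ 0) {x : 𝕜} (hx : 0 < x) :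
    0 < f x := by
  obtain ⟨y, hy, hfy⟩ := hne
  have hfy : 0 < f y := (hnonneg y hy).lt_of_ne' hfy
  rcases le_total y x with hyx | hxy
  · exact hfy.trans_le (monotoneOn_Ioi_of_concaveOn_of_nonneg hf hnonneg hy hx hyx)
  · have hdiv : f y / y ≤ f x / x := antitoneOn_div_self_of_concaveOn_of_nonneg hf hnonneg hx hy hxy
    exact (div_pos_iff_of_pos_right hx).1 ((div_pos hfy hy).trans_le hdiv)

lemma convexOn_inv_Ioi : ConvexOn 𝕜 (Ioi 0) (fun x : 𝕜 ↦ x⁻¹) := by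
  simpa using convexOn_zpow (𝕜 := 𝕜) (-1)

lemma convexOn_inv_of_concaveOn_of_pos {E : Type*} [AddCommMonoid E] [Module 𝕜 E] {s : Set E}
    {g : E → 𝕜} (hg : ConcaveOn 𝕜 s g) (hpos : ∀ x ∈ s, 0 < g x) :
    ConvexOn 𝕜 s (fun x ↦ (g x)⁻¹) := by
  refine ⟨hg.1, fun x hx y hy a b ha hb hab ↦ ?_⟩
  calc (g (a • x + b • y))⁻¹ ≤ (a • g x + b • g y)⁻¹ :=
        inv_anti₀ (convex_Ioi 0 (hpos x hx) (hpos y hy) ha hb hab) (hg.2 hx hy ha hb hab)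
    _ ≤ a • (g x)⁻¹ + b • (g y)⁻¹ := convexOn_inv_Ioi.2 (hpos x hx) (hpos y hy) ha hb hab

lemma convexOn_inv_of_concaveOn_div_self (hf : ConcaveOn 𝕜 (Ioi 0) (fun x ↦ f x / x))
    (hpos : ∀ x, 0 < x → 0 < f x) : ConvexOn 𝕜 (Ioi 0) (fun x ↦ (f x)⁻¹) := by
  have hdiv_pos : ∀ x, 0 < x → 0 < f x / x := fun x hx ↦ div_pos (hpos x hx) hx
  have hmono : MonotoneOn (fun x ↦ f x / x) (Ioi 0) :=
    monotoneOn_Ioi_of_concaveOn_of_nonneg hf fun x hx ↦ (hdiv_pos x hx).le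
  have hmonovary : MonovaryOn (fun x : 𝕜 ↦ x⁻¹) (fun x ↦ (f x / x)⁻¹) (Ioi 0) :=
    AntitoneOn.monovaryOn (fun _ hx _ _ hxy ↦ inv_anti₀ hx hxy)
      fun _ hx _ hy hxy ↦ inv_anti₀ (hdiv_pos _ hx) (hmono hx hy hxy)
  have hmul := convexOn_inv_Ioi.mul (convexOn_inv_of_concaveOn_of_pos hf hdiv_pos)
    (fun _ hx ↦ (inv_pos.2 hx).le) (fun x hx ↦ (inv_pos.2 (hdiv_pos x hx)).le) hmonovary
  refine hmul.congr fun x hx ↦ ?_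
  have hx : x ≠ 0 := ne_of_gt hx
  simp only [Pi.mul_apply, inv_div]
  field_simp

end OrderedField

section DerivDivPow

variable {n : ℕ}

lemma deriv_div_pow {𝕜 : Type*} [NontriviallyNormedField 𝕜] {f : 𝕜 → 𝕜} {s : 𝕜}
    (hf : DifferentiableAt 𝕜 f s) (hs : s ≠ 0) :
    deriv (fun t ↦ f t / t ^ n) s = (deriv f s - n * f s / s) / s ^ n := by
  rw [(hf.hasDerivAt.fun_div (hasDerivAt_pow n s) (pow_ne_zero n hs)).deriv]
  rcases n with _ | n
  · simp
  · field_simp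
    simp only [Nat.cast_add, Nat.cast_one, add_tsub_cancel_right]
    ring

variable {f : ℝ → ℝ} {s : ℝ}

lemma mul_div_le_deriv_of_monotoneOn_div_pow (hf : DifferentiableAt ℝ f s) (hs : 0 < s)
    (hmono : MonotoneOn (fun t ↦ f t / t ^ n) (Ioi 0)) : n * f s / s ≤ deriv f s := by
  have hderiv := hmono.derivWithin_nonneg (x := s)
  rw [derivWithin_of_isOpen isOpen_Ioi hs, deriv_div_pow hf hs.ne',
    le_div_iff₀ (pow_pos hs n), zero_mul] at hderiv
  exact sub_nonneg.1 hderiv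

lemma deriv_le_mul_div_of_antitoneOn_div_pow (hf : DifferentiableAt ℝ f s) (hs : 0 < s)
    (hanti : AntitoneOn (fun t ↦ f t / t ^ n) (Ioi 0)) : deriv f s ≤ n * f s / s := by
  have hderiv := hanti.derivWithin_nonpos (x := s)
  rw [derivWithin_of_isOpen isOpen_Ioi hs, deriv_div_pow hf hs.ne',
    div_le_iff₀ (pow_pos hs n), zero_mul] at hderiv
  exact sub_nonpos.1 hderiv

end DerivDivPow

section Kernel

lemma exp_neg_sub_one_add_nonneg (t : ℝ) : 0 ≤ Real.exp (-t) - 1 + t := by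
  linarith [Real.one_sub_le_exp_neg t]

lemma exp_neg_sub_one_add_le (t : ℝ) :
    Real.exp (-t) - 1 + t ≤ t * (1 - Real.exp (-t)) := by
  have h : (t + 1) * Real.exp (-t) ≤ Real.exp t * Real.exp (-t) := by
    gcongr
    exact Real.add_one_le_exp t
  rw [← Real.exp_add, add_neg_cancel, Real.exp_zero] at h
  linarith

lemma norm_mul_one_sub_exp_neg_le {x u C : ℝ} (hx : 0 ≤ x) (hu : 0 ≤ u) (huC : u ≤ C)
    (hC : 1 ≤ C) : ‖x * (1 - Real.exp (-(u * x)))‖ ≤ C * min x (x ^ 2) := by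
  have hexp : Real.exp (-(u * x)) ≤ 1 := Real.exp_le_one_iff.2 (neg_nonpos.2 (mul_nonneg hu hx))
  rw [Real.norm_of_nonneg (mul_nonneg hx (sub_nonneg.2 hexp)), mul_min_of_nonneg _ _ (by linarith)]
  refine le_min ?_ ?_
  · calc x * (1 - Real.exp (-(u * x))) ≤ x * C := by
          gcongr
          linarith [Real.exp_pos (-(u * x))]
      _ = C * x := mul_comm x C
  · calc x * (1 - Real.exp (-(u * x))) ≤ x * (u * x) := by
          gcongr
          linarith [Real.one_sub_le_exp_neg (u * x)]
      _ = u * x ^ 2 := by ring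
      _ ≤ C * x ^ 2 := by gcongr

lemma integral_one_sub_exp_neg_mul {s : ℝ} (hs : s ≠ 0) (x : ℝ) :
    ∫ y in (0 : ℝ)..x, (1 - Real.exp (-(s * y))) = (Real.exp (-(s * x)) - 1 + s * x) / s := by
  rw [intervalIntegral.integral_comp_mul_left (fun z ↦ 1 - Real.exp (-z)) hs,
    intervalIntegral.integral_sub (Continuous.intervalIntegrable (by fun_prop) _ _)
      (Continuous.intervalIntegrable (by fun_prop) _ _),
    intervalIntegral.integral_comp_neg (fun z ↦ Real.exp z)]
  simp only [mul_zero, neg_zero, sub_zero, intervalIntegral.integral_const, integral_exp,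
    smul_eq_mul, mul_one, Real.exp_zero]
  field_simp
  ring

lemma concaveOn_one_sub_exp_neg_mul (y : ℝ) :
    ConcaveOn ℝ univ (fun s : ℝ ↦ 1 - Real.exp (-(s * y))) := by
  have hexp : ConvexOn ℝ univ (fun s : ℝ ↦ Real.exp (-(s * y))) := by
    simpa [Function.comp_def] using convexOn_exp.comp_linearMap (-LinearMap.mulRight ℝ y)
  exact (concaveOn_const 1 convex_univ).sub hexp

lemma concaveOn_exp_neg_sub_one_add_div {x : ℝ} (hx : 0 ≤ x) :
    ConcaveOn ℝ (Ioi 0) (fun s : ℝ ↦ (Real.exp (-(s * x)) - 1 + s * x) / s) := by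
  have hconc : ConcaveOn ℝ (Ioi 0) (fun s : ℝ ↦ ∫ y in Ioc 0 x, (1 - Real.exp (-(s * y)))) :=
    integral_concaveOn_of_integrand_ae (convex_Ioi 0)
      (.of_forall fun y ↦ (concaveOn_one_sub_exp_neg_mul y).subset (subset_univ _) (convex_Ioi 0))
      fun s _ ↦ Continuous.integrableOn_Ioc (by fun_prop)
  refine hconc.congr fun s hs ↦ ?_
  simp only [← intervalIntegral.integral_of_le hx, integral_one_sub_exp_neg_mul (ne_of_gt hs)]

end Kernel

section LevyIntegral

variable {π : Measure ℝ} {s : ℝ}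

lemma integrableOn_min_self_sq
    (hπ : ∫⁻ x in Ioi (0 : ℝ), ENNReal.ofReal (min x (x ^ 2)) ∂π < ⊤) :
    IntegrableOn (fun x ↦ min x (x ^ 2)) (Ioi 0) π := by
  refine ⟨by fun_prop, ?_⟩
  rw [hasFiniteIntegral_iff_ofReal]
  · exact hπ
  · filter_upwards [ae_restrict_mem measurableSet_Ioi] with x hx
    exact le_min (le_of_lt hx) (sq_nonneg x)

lemma integrableOn_mul_one_sub_exp_neg (hπ : IntegrableOn (fun x ↦ min x (x ^ 2)) (Ioi 0) π)
    (hs : 0 ≤ s) : IntegrableOn (fun x ↦ x * (1 - Real.exp (-(s * x)))) (Ioi 0) π := by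
  refine (hπ.const_mul (max s 1)).mono' (by fun_prop) ?_
  filter_upwards [ae_restrict_mem measurableSet_Ioi] with x hx
  exact norm_mul_one_sub_exp_neg_le (le_of_lt hx) hs (le_max_left s 1) (le_max_right s 1)

lemma integrableOn_exp_neg_sub_one_add (hπ : IntegrableOn (fun x ↦ min x (x ^ 2)) (Ioi 0) π)
    (hs : 0 ≤ s) : IntegrableOn (fun x ↦ Real.exp (-(s * x)) - 1 + s * x) (Ioi 0) π := by
  refine ((integrableOn_mul_one_sub_exp_neg hπ hs).const_mul s).mono' (by fun_prop) ?_
  filter_upwards with x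
  rw [Real.norm_of_nonneg (exp_neg_sub_one_add_nonneg _), ← mul_assoc]
  exact exp_neg_sub_one_add_le _

lemma hasDerivAt_exp_neg_sub_one_add (x u : ℝ) :
    HasDerivAt (fun u ↦ Real.exp (-(u * x)) - 1 + u * x) (x * (1 - Real.exp (-(u * x)))) u := by
  have hmul : HasDerivAt (fun u ↦ u * x) x u := hasDerivAt_mul_const x
  exact ((hmul.fun_neg.exp.sub_const 1).add hmul).congr_deriv (by ring)

lemma hasDerivAt_integral_exp_neg_sub_one_add
    (hπ : IntegrableOn (fun x ↦ min x (x ^ 2)) (Ioi 0) π) (hs : 0 < s) :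
    HasDerivAt (fun u ↦ ∫ x in Ioi (0 : ℝ), (Real.exp (-(u * x)) - 1 + u * x) ∂π)
      (∫ x in Ioi (0 : ℝ), x * (1 - Real.exp (-(s * x))) ∂π) s := by
  refine (hasDerivAt_integral_of_dominated_loc_of_deriv_le
    (F := fun u x ↦ Real.exp (-(u * x)) - 1 + u * x)
    (F' := fun u x ↦ x * (1 - Real.exp (-(u * x))))
    (bound := fun x ↦ (s + 1) * min x (x ^ 2)) (Ioo_mem_nhds hs (lt_add_one s))
    (.of_forall fun u ↦ by fun_prop) (integrableOn_exp_neg_sub_one_add hπ hs.le) (by fun_prop)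
    ?_ (hπ.const_mul _) (.of_forall fun x u _ ↦ hasDerivAt_exp_neg_sub_one_add x u)).2
  filter_upwards [ae_restrict_mem measurableSet_Ioi] with x hx u hu
  exact norm_mul_one_sub_exp_neg_le (le_of_lt hx) hu.1.le hu.2.le (by linarith)

lemma concaveOn_integral_exp_neg_sub_one_add_div
    (hπ : IntegrableOn (fun x ↦ min x (x ^ 2)) (Ioi 0) π) :
    ConcaveOn ℝ (Ioi 0)
      (fun s ↦ ∫ x in Ioi (0 : ℝ), (Real.exp (-(s * x)) - 1 + s * x) / s ∂π) := by
  refine integral_concaveOn_of_integrand_ae (convex_Ioi 0) ?_ fun s hs ↦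
    (integrableOn_exp_neg_sub_one_add hπ (le_of_lt hs)).div_const s
  filter_upwards [ae_restrict_mem measurableSet_Ioi] with x hx
  exact concaveOn_exp_neg_sub_one_add_div (le_of_lt hx)

end LevyIntegral

/-- `Ψ` is, on `(0, ∞)`, the critical branching mechanism with quadratic coefficient `β` and Lévy
measure `π`. The measure lives on `ℝ`, but only its restriction to `(0, ∞)` matters; values of
`Ψ` outside `(0, ∞)` are unconstrained. -/
structure IsCriticalBranchingMechanism (Ψ : ℝ → ℝ) (β : ℝ) (π : Measure ℝ) : Prop where
  coeff_nonneg : 0 ≤ β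
  lintegral_min_lt_top : ∫⁻ x in Ioi (0 : ℝ), ENNReal.ofReal (min x (x ^ 2)) ∂π < ⊤
  eq_add_integral : ∀ u : ℝ, 0 < u →
    Ψ u = β * u ^ 2 + ∫ x in Ioi (0 : ℝ), (Real.exp (-(u * x)) - 1 + u * x) ∂π

namespace IsCriticalBranchingMechanism

variable {Ψ : ℝ → ℝ} {β s : ℝ} {π : Measure ℝ}

lemma nonneg (h : IsCriticalBranchingMechanism Ψ β π) (hs : 0 < s) : 0 ≤ Ψ s := by
  rw [h.eq_add_integral s hs]
  exact add_nonneg (mul_nonneg h.coeff_nonneg (sq_nonneg s))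
    (integral_nonneg fun x ↦ exp_neg_sub_one_add_nonneg _)

lemma differentiableAt (h : IsCriticalBranchingMechanism Ψ β π) (hs : 0 < s) :
    DifferentiableAt ℝ Ψ s := by
  have hint := (hasDerivAt_integral_exp_neg_sub_one_add
    (integrableOn_min_self_sq h.lintegral_min_lt_top) hs).differentiableAt
  have hquad : DifferentiableAt ℝ (fun u ↦ β * u ^ 2) s := by fun_prop
  refine (hquad.add hint).congr_of_eventuallyEq ?_
  filter_upwards [Ioi_mem_nhds hs] with u hu
  exact h.eq_add_integral u hu

lemma concaveOn_div_self (h : IsCriticalBranchingMechanism Ψ β π) :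
    ConcaveOn ℝ (Ioi 0) (fun s ↦ Ψ s / s) := by
  have hlin : ConcaveOn ℝ (Ioi 0) (fun s : ℝ ↦ β * s) :=
    (concaveOn_id (convex_Ioi 0)).smul h.coeff_nonneg
  refine (hlin.add (concaveOn_integral_exp_neg_sub_one_add_div
    (integrableOn_min_self_sq h.lintegral_min_lt_top))).congr fun s hs ↦ ?_
  have hs' : s ≠ 0 := ne_of_gt hs
  simp only [Pi.add_apply]
  rw [integral_div, h.eq_add_integral s hs]
  field_simp

lemma monotoneOn_div_self (h : IsCriticalBranchingMechanism Ψ β π) :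
    MonotoneOn (fun s ↦ Ψ s / s) (Ioi 0) :=
  monotoneOn_Ioi_of_concaveOn_of_nonneg h.concaveOn_div_self
    fun _ hs ↦ div_nonneg (h.nonneg hs) hs.le

lemma antitoneOn_div_sq (h : IsCriticalBranchingMechanism Ψ β π) :
    AntitoneOn (fun s ↦ Ψ s / s ^ 2) (Ioi 0) := by
  simpa only [div_div, ← sq] using antitoneOn_div_self_of_concaveOn_of_nonneg h.concaveOn_div_self
    fun _ hs ↦ div_nonneg (h.nonneg hs) hs.le

lemma pos (h : IsCriticalBranchingMechanism Ψ β π) (hne : ∃ u, 0 < u ∧ Ψ u ≠ 0) (hs : 0 < s) :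
    0 < Ψ s := by
  obtain ⟨u, hu, hΨu⟩ := hne
  exact (div_pos_iff_of_pos_right hs).1 <| pos_of_concaveOn_Ioi_of_nonneg h.concaveOn_div_self
    (fun _ ht ↦ div_nonneg (h.nonneg ht) ht.le) ⟨u, hu, div_ne_zero hΨu hu.ne'⟩ hs

lemma div_self_le_deriv (h : IsCriticalBranchingMechanism Ψ β π) (hs : 0 < s) :
    Ψ s / s ≤ deriv Ψ s := by
  simpa using mul_div_le_deriv_of_monotoneOn_div_pow (n := 1) (h.differentiableAt hs) hs
    (by simpa using h.monotoneOn_div_self)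

lemma deriv_le_two_mul_div_self (h : IsCriticalBranchingMechanism Ψ β π) (hs : 0 < s) :
    deriv Ψ s ≤ 2 * Ψ s / s :=
  deriv_le_mul_div_of_antitoneOn_div_pow (n := 2) (h.differentiableAt hs) hs h.antitoneOn_div_sq

lemma convexOn_one_div (h : IsCriticalBranchingMechanism Ψ β π) (hne : ∃ u, 0 < u ∧ Ψ u ≠ 0) :
    ConvexOn ℝ (Ioi 0) (fun s ↦ 1 / Ψ s) := by
  simpa only [one_div] using
    convexOn_inv_of_concaveOn_div_self h.concaveOn_div_self fun _ hs ↦ h.pos hne hs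

end IsCriticalBranchingMechanism

/-- for a critical branching mechanism `Ψ` (not identically
zero), one has `Ψ(s)/s ≤ Ψ'(s) ≤ 2Ψ(s)/s` for all `s > 0` (equivalently,
`s ↦ Ψ(s)/s` is nondecreasing and `s ↦ Ψ(s)/s²` is nonincreasing), and
`s ↦ 1/Ψ(s)` is convex on `(0,∞)`. -/
theorem critical_bm_derivative_bounds_and_convexity
    (Ψ : ℝ → ℝ) (β : ℝ) (π : Measure ℝ)
    (hβ : 0 ≤ β)
    (hπfin : ∫⁻ x in Ioi (0:ℝ), ENNReal.ofReal (min x (x ^ 2)) ∂π < ⊤)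
    (hΨ : ∀ u : ℝ, 0 < u →
      Ψ u = β * u ^ 2 + ∫ x in Ioi (0:ℝ), (Real.exp (-(u * x)) - 1 + u * x) ∂π)
    (hnz : ∃ u : ℝ, 0 < u ∧ Ψ u ≠ 0) :
    (∀ s : ℝ, 0 < s → Ψ s / s ≤ deriv Ψ s ∧ deriv Ψ s ≤ 2 * Ψ s / s) ∧
    MonotoneOn (fun s => Ψ s / s) (Ioi 0) ∧
    AntitoneOn (fun s => Ψ s / s ^ 2) (Ioi 0) ∧
    ConvexOn ℝ (Ioi 0) (fun s => 1 / Ψ s) := by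
  have h : IsCriticalBranchingMechanism Ψ β π := ⟨hβ, hπfin, hΨ⟩
  exact ⟨fun s hs ↦ ⟨h.div_self_le_deriv hs, h.deriv_le_two_mul_div_self hs⟩,
    h.monotoneOn_div_self, h.antitoneOn_div_sq, h.convexOn_one_div hnz⟩
end
end
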